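/- arXiv:1802.02724 — 4 statements merged into one kernel-verified Lean document; each statement's English description precedes it below -/
import Mathlib

section
/- Let X ⊆ ℝⁿ be convex, f₀, f₁, …, f_m : ℝⁿ → ℝ convex, and let x̄ be a random vector taking values in X such that f₀(x̄) and each f_i(x̄) are integrable. Let ε₁, ε₂ ≥ 0 and suppose that for every bounded nonnegative random vector z in ℝ^m (which may depend on x̄), E[Φ(x̄; x*, z)] ≤ ε₁ + ε₂ E‖z‖². Let x* ∈ X and z* ∈ ℝ^m with z* ≥ 0 componentwise satisfy Φ(x; x*, z*) ≥ 0 for all x ∈ X (as holds at any KKT point). Then E|f₀(x̄) − f₀(x*)| ≤ 2ε₁ + 9ε₂‖z*‖². -/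
open MeasureTheory RealInnerProductSpace Finset

/-- if `E[Φ(x̄; x*, z)] ≤ ε₁ + ε₂ E‖z‖²` for every bounded nonnegative
random vector `z`, and `(x*, z*)` satisfies `Φ(x; x*, z*) ≥ 0` on `X` (as at a KKT point),
then `E|f₀(x̄) − f₀(x*)| ≤ 2ε₁ + 9ε₂‖z*‖²`. -/
theorem statement1 {n m : ℕ} (hm : 0 < m)
    {Ω : Type*} [MeasurableSpace Ω] (P : Measure Ω) [IsProbabilityMeasure P]
    (X : Set (EuclideanSpace ℝ (Fin n))) (hX : Convex ℝ X)
    (f0 : EuclideanSpace ℝ (Fin n) → ℝ) (f : Fin m → EuclideanSpace ℝ (Fin n) → ℝ)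
    (hf0 : ConvexOn ℝ Set.univ f0) (hf : ∀ i, ConvexOn ℝ Set.univ (f i))
    (xbar : Ω → EuclideanSpace ℝ (Fin n)) (hxbarX : ∀ ω, xbar ω ∈ X)
    (hxbar_meas : Measurable xbar)
    (hint0 : Integrable (fun ω => f0 (xbar ω)) P)
    (hint : ∀ i, Integrable (fun ω => f i (xbar ω)) P)
    (ε₁ ε₂ : ℝ) (hε₁ : 0 ≤ ε₁) (hε₂ : 0 ≤ ε₂)
    (xs : EuclideanSpace ℝ (Fin n)) (hxsX : xs ∈ X)
    (zs : Fin m → ℝ) (hzs : ∀ i, 0 ≤ zs i)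
    (hopt : ∀ x ∈ X, 0 ≤ f0 x - f0 xs + (m : ℝ)⁻¹ * ∑ i, zs i * f i x)
    (hbound : ∀ z : Ω → Fin m → ℝ, Measurable z → (∀ ω i, 0 ≤ z ω i) →
      (∃ B, ∀ ω i, z ω i ≤ B) →
      (∫ ω, (f0 (xbar ω) - f0 xs + (m : ℝ)⁻¹ * ∑ i, z ω i * f i (xbar ω)) ∂P)
        ≤ ε₁ + ε₂ * ∫ ω, ∑ i, z ω i ^ 2 ∂P) :
    (∫ ω, |f0 (xbar ω) - f0 xs| ∂P) ≤ 2 * ε₁ + 9 * ε₂ * ∑ i, zs i ^ 2 := by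
  have hmeas : ∀ i, Measurable (fun ω => f i (xbar ω)) := fun i => by
    have hc : Continuous (f i) :=
      continuousOn_univ.mp ((hf i).continuousOn isOpen_univ)
    exact hc.measurable.comp hxbar_meas
  have hz_le : ∀ ω i, (if 0 < f i (xbar ω) then 2 * zs i else 0) ≤ 2 * zs i := by
    intro ω i
    have := hzs i
    split_ifs <;> linarith
  have hz_nn : ∀ ω i, 0 ≤ (if 0 < f i (xbar ω) then 2 * zs i else 0) := by
    intro ω i
    have := hzs i
    split_ifs <;> linarith
  have hz_meas : ∀ i, Measurable (fun ω => if 0 < f i (xbar ω) then 2 * zs i else 0) :=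
    fun i => Measurable.ite (measurableSet_lt measurable_const (hmeas i))
      measurable_const measurable_const
  have key := hbound (fun ω i => if 0 < f i (xbar ω) then 2 * zs i else 0)
    (measurable_pi_lambda _ hz_meas) hz_nn
    ⟨∑ j, 2 * zs j, fun ω i => (hz_le ω i).trans
      (Finset.single_le_sum (f := fun j => 2 * zs j)
        (fun j _ => by have := hzs j; positivity) (Finset.mem_univ i))⟩
  have hD : Integrable (fun ω => f0 (xbar ω) - f0 xs) P := hint0.sub (integrable_const _)
  have hI : Integrable (fun ω => f0 (xbar ω) - f0 xs + (m : ℝ)⁻¹ *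
      ∑ i, (if 0 < f i (xbar ω) then 2 * zs i else 0) * f i (xbar ω)) P := by
    refine hD.add (Integrable.const_mul (integrable_finset_sum _ fun i _ => ?_) _)
    refine (hint i).bdd_mul (c := 2 * zs i) (hz_meas i).aestronglyMeasurable
      (Filter.Eventually.of_forall fun ω => ?_)
    rw [Real.norm_of_nonneg (hz_nn ω i)]
    exact hz_le ω i
  have h1 : (∫ ω, |f0 (xbar ω) - f0 xs| ∂P) ≤ ∫ ω, (f0 (xbar ω) - f0 xs + (m : ℝ)⁻¹ *
      ∑ i, (if 0 < f i (xbar ω) then 2 * zs i else 0) * f i (xbar ω)) ∂P := by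
    refine integral_mono hD.abs hI fun ω => ?_
    have hm' : (0 : ℝ) ≤ (m : ℝ)⁻¹ := by positivity
    have ho := hopt _ (hxbarX ω)
    have a1 : 2 * ∑ i, zs i * f i (xbar ω) ≤
        ∑ i, (if 0 < f i (xbar ω) then 2 * zs i else 0) * f i (xbar ω) := by
      rw [Finset.mul_sum]
      refine Finset.sum_le_sum fun i _ => ?_
      split_ifs with h
      · linarith
      · nlinarith [hzs i, mul_nonneg (hzs i) (sub_nonneg.2 (not_lt.1 h))]
    have a2 : 0 ≤ ∑ i, (if 0 < f i (xbar ω) then 2 * zs i else 0) * f i (xbar ω) := by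
      refine Finset.sum_nonneg fun i _ => ?_
      have := hzs i
      split_ifs with h
      · positivity
      · simp
    have b1 := mul_le_mul_of_nonneg_left a1 hm'
    have b2 := mul_nonneg hm' a2
    have b3 : (m : ℝ)⁻¹ * (2 * ∑ i, zs i * f i (xbar ω)) =
      2 * ((m : ℝ)⁻¹ * ∑ i, zs i * f i (xbar ω)) := by ring
    apply abs_le.2 ⟨?_, ?_⟩ <;> linarith
  have h2 : (∫ ω, ∑ i, (if 0 < f i (xbar ω) then 2 * zs i else 0) ^ 2 ∂P)
      ≤ 4 * ∑ i, zs i ^ 2 := by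
    have hle : ∀ ω, ∑ i, (if 0 < f i (xbar ω) then 2 * zs i else 0) ^ 2
        ≤ 4 * ∑ i, zs i ^ 2 := by
      intro ω
      rw [Finset.mul_sum]
      refine Finset.sum_le_sum fun i _ => ?_
      have := pow_le_pow_left₀ (hz_nn ω i) (hz_le ω i) 2
      linarith [mul_pow 2 (zs i) 2]
    calc _ ≤ ∫ _ω, 4 * ∑ i, zs i ^ 2 ∂P :=
          integral_mono_of_nonneg (Filter.Eventually.of_forall fun ω =>
            Finset.sum_nonneg fun i _ => sq_nonneg _) (integrable_const _)
            (Filter.Eventually.of_forall hle)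
      _ = _ := by simp
  have h3 := mul_le_mul_of_nonneg_left h2 hε₂
  have h4 : 0 ≤ ε₂ * ∑ i, zs i ^ 2 :=
    mul_nonneg hε₂ (Finset.sum_nonneg fun i _ => sq_nonneg _)
  have h5 := h1.trans key
  nlinarith
end

section
/- Let X ⊆ ℝⁿ be convex, f₀, f₁, …, f_m : ℝⁿ → ℝ convex, and let x̄ be a random vector taking values in X such that f₀(x̄) and each f_i(x̄) are integrable. Let ε₁, ε₂ ≥ 0 and suppose that for every bounded nonnegative random vector z in ℝ^m (which may depend on x̄), E[Φ(x̄; x*, z)] ≤ ε₁ + ε₂ E‖z‖². Let x* ∈ X and z* ∈ ℝ^m with z* ≥ 0 componentwise satisfy Φ(x; x*, z*) ≥ 0 for all x ∈ X (as holds at any KKT point). Then E[(1/m) Σ_{i=1}^m [f_i(x̄)]_+] ≤ ε₁ + ε₂‖1 + z*‖². -/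
open MeasureTheory RealInnerProductSpace Finset

/-- under the same hypotheses, the expected average constraint violation
random vector `z`, and `(x*, z*)` satisfies `Φ(x; x*, z*) ≥ 0` on `X` (as at a KKT point),
satisfies `E[(1/m) Σᵢ [fᵢ(x̄)]₊] ≤ ε₁ + ε₂‖1 + z*‖²`. -/
theorem statement2 {n m : ℕ} (hm : 0 < m)
    {Ω : Type*} [MeasurableSpace Ω] (P : Measure Ω) [IsProbabilityMeasure P]
    (X : Set (EuclideanSpace ℝ (Fin n))) (hX : Convex ℝ X)
    (f0 : EuclideanSpace ℝ (Fin n) → ℝ) (f : Fin m → EuclideanSpace ℝ (Fin n) → ℝ)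
    (hf0 : ConvexOn ℝ Set.univ f0) (hf : ∀ i, ConvexOn ℝ Set.univ (f i))
    (xbar : Ω → EuclideanSpace ℝ (Fin n)) (hxbarX : ∀ ω, xbar ω ∈ X)
    (hxbar_meas : Measurable xbar)
    (hint0 : Integrable (fun ω => f0 (xbar ω)) P)
    (hint : ∀ i, Integrable (fun ω => f i (xbar ω)) P)
    (ε₁ ε₂ : ℝ) (hε₁ : 0 ≤ ε₁) (hε₂ : 0 ≤ ε₂)
    (xs : EuclideanSpace ℝ (Fin n)) (hxsX : xs ∈ X)
    (zs : Fin m → ℝ) (hzs : ∀ i, 0 ≤ zs i)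
    (hopt : ∀ x ∈ X, 0 ≤ f0 x - f0 xs + (m : ℝ)⁻¹ * ∑ i, zs i * f i x)
    (hbound : ∀ z : Ω → Fin m → ℝ, Measurable z → (∀ ω i, 0 ≤ z ω i) →
      (∃ B, ∀ ω i, z ω i ≤ B) →
      (∫ ω, (f0 (xbar ω) - f0 xs + (m : ℝ)⁻¹ * ∑ i, z ω i * f i (xbar ω)) ∂P)
        ≤ ε₁ + ε₂ * ∫ ω, ∑ i, z ω i ^ 2 ∂P) :
    (∫ ω, (m : ℝ)⁻¹ * ∑ i, max (f i (xbar ω)) 0 ∂P) ≤ ε₁ + ε₂ * ∑ i, (1 + zs i) ^ 2 := by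
  have hmeas : ∀ i, Measurable (fun ω => f i (xbar ω)) := fun i => by
    have hc : Continuous (f i) :=
      continuousOn_univ.mp ((hf i).continuousOn isOpen_univ)
    exact hc.measurable.comp hxbar_meas
  let z : Ω → Fin m → ℝ := fun ω i => if 0 < f i (xbar ω) then 1 + zs i else zs i
  have hz0 : ∀ ω i, 0 ≤ z ω i := fun ω i => by
    have := hzs i
    simp only [z]
    split_ifs <;> linarith
  have hz1 : ∀ ω i, z ω i ≤ 1 + zs i := fun ω i => by
    simp only [z]
    split_ifs <;> linarith
  have hzm : Measurable z := by
    refine measurable_pi_lambda _ fun i => ?_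
    exact Measurable.ite (measurableSet_lt measurable_const (hmeas i))
      measurable_const measurable_const
  have hzm' : ∀ i, Measurable (fun ω => z ω i) := fun i => (measurable_pi_apply i).comp hzm
  have hzf : ∀ ω i, z ω i * f i (xbar ω) = zs i * f i (xbar ω) + max (f i (xbar ω)) 0 := by
    intro ω i
    simp only [z]
    split_ifs with h
    · rw [max_eq_left h.le]; ring
    · rw [max_eq_right (not_lt.mp h)]; ring
  have key := hbound z hzm hz0 ⟨∑ i, (1 + zs i), fun ω i => (hz1 ω i).trans
    (Finset.single_le_sum (f := fun i => 1 + zs i)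
      (fun j _ => by have := hzs j; linarith) (Finset.mem_univ i))⟩
  have hsq : ∀ ω, ∑ i, z ω i ^ 2 ≤ ∑ i, (1 + zs i) ^ 2 := fun ω =>
    Finset.sum_le_sum fun i _ => pow_le_pow_left₀ (hz0 ω i) (hz1 ω i) 2
  have hsqi : ∫ ω, ∑ i, z ω i ^ 2 ∂P ≤ ∑ i, (1 + zs i) ^ 2 := by
    have h := integral_mono_of_nonneg (μ := P) (f := fun ω => ∑ i, z ω i ^ 2)
      (g := fun _ => ∑ i, (1 + zs i) ^ 2)
      (Filter.Eventually.of_forall fun ω => Finset.sum_nonneg fun i _ => sq_nonneg _)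
      (integrable_const _) (Filter.Eventually.of_forall hsq)
    simpa using h
  have hmaxi : ∀ i, Integrable (fun ω => max (f i (xbar ω)) 0) P := fun i => (hint i).pos_part
  have hmono : (∫ ω, (m : ℝ)⁻¹ * ∑ i, max (f i (xbar ω)) 0 ∂P) ≤
      ∫ ω, (f0 (xbar ω) - f0 xs + (m : ℝ)⁻¹ * ∑ i, z ω i * f i (xbar ω)) ∂P := by
    refine integral_mono ((integrable_finset_sum _ fun i _ => hmaxi i).const_mul _) ?_ ?_
    · refine (hint0.sub (integrable_const _)).add
        ((integrable_finset_sum _ fun i _ => ?_).const_mul _)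
      simp only [hzf]
      exact ((hint i).const_mul _).add (hmaxi i)
    · intro ω
      have h := hopt _ (hxbarX ω)
      simp only [hzf, Finset.sum_add_distrib, mul_add]
      linarith
  have := mul_le_mul_of_nonneg_left hsqi hε₂
  linarith
end

section
/- Let β > 0, ρ > 0, x⁺ ∈ ℝⁿ, z^k ∈ ℝ^m, and z ∈ ℝ^m with z ≥ 0 componentwise. For each i ∈ [m] let z^{(i)} ∈ ℝ^m be the vector that agrees with z^k in all coordinates except that its i-th coordinate equals z^k_i + ρ·max(−z^k_i/β, f_i(x⁺)). Then −Ψ_β(x⁺, z^k) + (1/m) Σ_{i=1}^m z_i f_i(x⁺) + (1/(2ρ)) · (1/m) Σ_{i=1}^m (‖z^{(i)} − z‖² − ‖z^k − z‖²) ≤ (1/(2ρ) − β/(2ρ²)) · (1/m) Σ_{i=1}^m ‖z^{(i)} − z^k‖². (This is Lemma 3.2 of the paper, with the conditional expectation over a uniformly random index j_k ∈ [m] written out as an average over i ∈ [m].) -/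
open RealInnerProductSpace Finset

/-- The function `ψ_β(u, v)` from the augmented Lagrangian. -/
noncomputable def psi (β u v : ℝ) : ℝ :=
  if 0 ≤ β * u + v then u * v + β / 2 * u ^ 2 else -v ^ 2 / (2 * β)

theorem scalar_aux (β ρ u v z : ℝ) (hβ : 0 < β) (hρ : 0 < ρ) (hz : 0 ≤ z) :
    -psi β u v + z * u
      + 1 / (2 * ρ) * ((v + ρ * max (-v / β) u - z) ^ 2 - (v - z) ^ 2)
      ≤ (1 / (2 * ρ) - β / (2 * ρ ^ 2)) * (ρ * max (-v / β) u) ^ 2 := by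
  have key : -psi β u v + z * u + max (-v / β) u * (v - z) + β / 2 * (max (-v / β) u) ^ 2 ≤ 0 := by
    unfold psi
    split_ifs with h
    · have h1 : -v / β ≤ u := by rw [div_le_iff₀ hβ]; linarith
      rw [max_eq_right h1]
      apply le_of_eq; ring
    · have h1 : u ≤ -v / β := by rw [le_div_iff₀ hβ]; linarith
      rw [max_eq_left h1]
      have h2 : z * u ≤ z * (-v / β) := mul_le_mul_of_nonneg_left h1 hz
      have h3 : -(-v ^ 2 / (2 * β)) + z * (-v / β) + -v / β * (v - z)
          + β / 2 * (-v / β) ^ 2 = 0 := by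
        field_simp; ring
      linarith
  generalize max (-v / β) u = d at *
  have e1 : 1 / (2 * ρ) * ((v + ρ * d - z) ^ 2 - (v - z) ^ 2) = d * (v - z) + ρ / 2 * d ^ 2 := by
    field_simp; ring
  have e2 : (1 / (2 * ρ) - β / (2 * ρ ^ 2)) * (ρ * d) ^ 2 = ρ / 2 * d ^ 2 - β / 2 * d ^ 2 := by
    field_simp
  rw [e1, e2]
  linarith

/-- Lemma 3.2 of the paper, with the conditional expectation over the
uniformly random index written out as an average over `i ∈ [m]`. -/
theorem statement3 {n m : ℕ} (hm : 0 < m)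
    (f : Fin m → EuclideanSpace ℝ (Fin n) → ℝ) (hf : ∀ i, ConvexOn ℝ Set.univ (f i))
    (β ρ : ℝ) (hβ : 0 < β) (hρ : 0 < ρ)
    (xp : EuclideanSpace ℝ (Fin n)) (zk z : Fin m → ℝ) (hz : ∀ i, 0 ≤ z i)
    (zi : Fin m → Fin m → ℝ)
    (hzi : ∀ i j, zi i j =
      if j = i then zk j + ρ * max (-(zk j) / β) (f j xp) else zk j) :
    -((m : ℝ)⁻¹ * ∑ i, psi β (f i xp) (zk i)) + (m : ℝ)⁻¹ * ∑ i, z i * f i xp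
        + 1 / (2 * ρ) * ((m : ℝ)⁻¹ * ∑ i, ((∑ j, (zi i j - z j) ^ 2) - ∑ j, (zk j - z j) ^ 2))
      ≤ (1 / (2 * ρ) - β / (2 * ρ ^ 2)) * ((m : ℝ)⁻¹ * ∑ i, ∑ j, (zi i j - zk j) ^ 2) := by
  have hA : ∀ i, (∑ j, (zi i j - z j) ^ 2) - ∑ j, (zk j - z j) ^ 2
      = (zk i + ρ * max (-(zk i) / β) (f i xp) - z i) ^ 2 - (zk i - z i) ^ 2 := by
    intro i
    rw [← Finset.sum_sub_distrib, Finset.sum_eq_single i]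
    · rw [hzi, if_pos rfl]
    · intro j _ hj
      rw [hzi, if_neg hj, sub_self]
    · intro h; exact absurd (Finset.mem_univ i) h
  have hB : ∀ i, ∑ j, (zi i j - zk j) ^ 2 = (ρ * max (-(zk i) / β) (f i xp)) ^ 2 := by
    intro i
    rw [Finset.sum_eq_single i]
    · rw [hzi, if_pos rfl]; ring
    · intro j _ hj
      rw [hzi, if_neg hj]; ring
    · intro h; exact absurd (Finset.mem_univ i) h
  simp only [hA, hB]
  have hS := Finset.sum_le_sum (fun i (_ : i ∈ (Finset.univ : Finset (Fin m))) =>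
    scalar_aux β ρ (f i xp) (zk i) (z i) hβ hρ (hz i))
  rw [Finset.sum_add_distrib, Finset.sum_add_distrib, Finset.sum_neg_distrib,
    ← Finset.mul_sum, ← Finset.mul_sum] at hS
  have hm' : (0 : ℝ) ≤ (m : ℝ)⁻¹ := by positivity
  have := mul_le_mul_of_nonneg_left hS hm'
  linarith
end

section
/- Let β > 0. For each fixed v ∈ ℝ, the function u ↦ ψ_β(u, v) is convex on ℝ and differentiable everywhere with derivative u ↦ [βu + v]_+ = max(βu + v, 0). For each fixed u ∈ ℝ, the function v ↦ ψ_β(u, v) is concave on ℝ and differentiable everywhere with derivative v ↦ max(−v/β, u). -/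
lemma hasDerivAt_sq_pos_part (x : ℝ) :
    HasDerivAt (fun y : ℝ => (max y 0) ^ 2) (2 * max x 0) x := by
  rw [hasDerivAt_iff_isLittleO]
  have h1 : (fun y : ℝ => (y - x) ^ 2) =o[nhds x] fun y => y - x := by
    have h := (Asymptotics.isLittleO_pow_sub_sub x (m := 2) (by norm_num))
    simpa using h
  refine Asymptotics.IsBigO.trans_isLittleO (Asymptotics.IsBigO.of_bound 1 ?_) h1
  refine Filter.Eventually.of_forall fun y => ?_
  rw [Real.norm_eq_abs, Real.norm_eq_abs, abs_of_nonneg (sq_nonneg (y - x)), abs_le, smul_eq_mul]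
  rcases le_total x 0 with hx | hx <;> rcases le_total y 0 with hy | hy <;>
    simp only [hx, hy, max_eq_left, max_eq_right] <;> constructor <;> nlinarith

lemma psi_eq (β : ℝ) (hβ : 0 < β) (u v : ℝ) :
    psi β u v = ((max (β * u + v) 0) ^ 2 - v ^ 2) / (2 * β) := by
  unfold psi
  split_ifs with h
  · rw [max_eq_left h]; field_simp; ring
  · rw [max_eq_right (not_le.mp h).le]; ring

/-- for fixed `v`, `u ↦ ψ_β(u, v)` is convex and differentiable with
derivative `[βu + v]₊`; for fixed `u`, `v ↦ ψ_β(u, v)` is concave and differentiable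
with derivative `max(−v/β, u)`. -/
theorem statement7 (β : ℝ) (hβ : 0 < β) :
    (∀ v : ℝ, ConvexOn ℝ Set.univ (fun u => psi β u v) ∧
      ∀ u : ℝ, HasDerivAt (fun u => psi β u v) (max (β * u + v) 0) u) ∧
    (∀ u : ℝ, ConcaveOn ℝ Set.univ (fun v => psi β u v) ∧
      ∀ v : ℝ, HasDerivAt (fun v => psi β u v) (max (-v / β) u) v) := by
  have A : ∀ v u : ℝ, HasDerivAt (fun u => psi β u v) (max (β * u + v) 0) u := by
    intro v u
    simp only [psi_eq β hβ]
    have hl : HasDerivAt (fun u : ℝ => β * u + v) β u := by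
      simpa using ((hasDerivAt_id u).const_mul β).add_const v
    have h := (((hasDerivAt_sq_pos_part (β * u + v)).comp u hl).sub_const (v ^ 2)).div_const (2 * β)
    refine h.congr_deriv ?_
    field_simp
  have B : ∀ u v : ℝ, HasDerivAt (fun v => psi β u v) (max (-v / β) u) v := by
    intro u v
    simp only [psi_eq β hβ]
    have hl : HasDerivAt (fun v : ℝ => β * u + v) 1 v := (hasDerivAt_id v).const_add (β * u)
    have h := (((hasDerivAt_sq_pos_part (β * u + v)).comp v hl).sub
      (hasDerivAt_pow 2 v)).div_const (2 * β)
    refine h.congr_deriv ?_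
    rcases le_total (β * u + v) 0 with hx | hx
    · have : u ≤ -v / β := by rw [le_div_iff₀ hβ]; linarith
      rw [max_eq_right hx, max_eq_left this]; field_simp; norm_num
    · have : -v / β ≤ u := by rw [div_le_iff₀ hβ]; linarith
      rw [max_eq_left hx, max_eq_right this]; field_simp; norm_num; ring
  refine ⟨fun v => ⟨?_, A v⟩, fun u => ⟨?_, B u⟩⟩
  · refine Monotone.convexOn_univ_of_deriv (fun u => (A v u).differentiableAt) ?_
    intro a b hab
    rw [(A v a).deriv, (A v b).deriv]
    gcongr
  · refine Antitone.concaveOn_univ_of_deriv (fun v => (B u v).differentiableAt) ?_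
    intro a b hab
    rw [(B u a).deriv, (B u b).deriv]
    gcongr
end
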